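/- arXiv:2603.10244 — 3 statements merged into one kernel-verified Lean document; each statement's English description precedes it below -/
import Mathlib

section
/- Fix n ≥ 2, j ∈ {2,…,n}, and d ∈ Z_{≥0}^n with ∑_i d_i = C(n,2)+1. With A and B defined as above (word tuples with alphabet constraints w_l ∈ {l,…,n}*, lengths a permutation of {0,…,n−1}, unique deficit letter: in A the deficit letter k lies in [i, j−1] together with the condition |w_i| < |w_j|; in B the deficit letter lies in {j,…,n}), there exists an injection f : A → B. Consequently |A| ≤ |B|. -/
open Finset

/-- The set `A` of pairs `((w_1,…,w_n), i)`: `i ∈ [j−1]` (0-indexed `i < j`),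
alphabet constraints `w_l ∈ {l,…,n}^*`, lengths a permutation of `{0,…,n−1}`,
`|w_i| < |w_j|`, and a deficit letter `k ∈ [i, j−1]` relative to `d`. -/
def Aset (n : ℕ) (j : Fin n) (d : Fin n → ℕ) : Set ((Fin n → List (Fin n)) × Fin n) :=
  {wi | wi.2 < j ∧
    (∀ l : Fin n, ∀ a ∈ wi.1 l, l ≤ a) ∧
    (∃ σ : Equiv.Perm (Fin n), ∀ l, (wi.1 l).length = (σ l : ℕ)) ∧
    (wi.1 wi.2).length < (wi.1 j).length ∧
    (∃ k : Fin n, wi.2 ≤ k ∧ k < j ∧ ∀ l : Fin n,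
      (∑ m, (wi.1 m).count l) + (if l = k then 1 else 0) = d l)}

/-- The set `B` of tuples `(w_1,…,w_n)` with alphabet constraints, lengths a
permutation of `{0,…,n−1}`, and a deficit letter `k ∈ {j,…,n}` relative to `d`. -/
def Bset (n : ℕ) (j : Fin n) (d : Fin n → ℕ) : Set (Fin n → List (Fin n)) :=
  {w | (∀ l : Fin n, ∀ a ∈ w l, l ≤ a) ∧
    (∃ σ : Equiv.Perm (Fin n), ∀ l, (w l).length = (σ l : ℕ)) ∧
    (∃ k : Fin n, j ≤ k ∧ ∀ l : Fin n,
      (∑ m, (w m).count l) + (if l = k then 1 else 0) = d l)}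

/-!
Put `y_l = ∑_{a ≥ l} x_a`. Then `∏ y_l ^ σ l` is the generating function of the word tuples with
lengths `σ`, and a deficit letter in `[i, j)` or in `[j, n]` contributes a factor `y_i - y_j` or
`y_j`. Hence `|A|` and `|B|` are bounded by, respectively equal to, the coefficient of `x ^ d` in
`∑_σ ∑_{i < j, σ i < σ j} (y_i - y_j) y ^ σ` and in `∑_σ y_j y ^ σ`, and it suffices that the
second polynomial dominates the first one coefficientwise.

For this, lower the value of `σ` at `j` to the next smaller value taken before `j`. This map is
injective on the permutations that have such a value and removes exactly one of the indices `i`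
from the inner sum, so that `∑_σ (r σ + 1) y_j y ^ σ` dominates `∑_σ r σ y_j y ^ (lowered σ)`,
where `r σ` is the number of these indices. The latter sum dominates `∑_σ ∑_i y_i y ^ σ`: pairing
`i` with the index of the next smaller value, this becomes an inequality of Muirhead type between
monomials in three of the `y_l`.
-/

section Positions

variable {ι : Type*} [LinearOrder ι] [Fintype ι] {i j k : ι} {σ : Equiv.Perm ι}

/-- The positions before `j` at which `σ` takes a smaller value than at `j`. When `σ` gives the
word lengths, these are the `i` admitted by the length condition in `Aset`. -/
def smallerBefore (j : ι) (σ : Equiv.Perm ι) : Finset ι := {i | i < j ∧ σ i < σ j}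

lemma mem_smallerBefore : i ∈ smallerBefore j σ ↔ i < j ∧ σ i < σ j := by
  simp [smallerBefore]

lemma smallerBefore_mul_swap (hi : i ∈ smallerBefore j σ) (hk : k ∈ smallerBefore j σ) :
    smallerBefore j (σ * Equiv.swap i k) = smallerBefore j σ := by
  ext l
  rw [mem_smallerBefore] at hi hk
  simp only [mem_smallerBefore, Equiv.Perm.mul_apply,
    Equiv.swap_apply_of_ne_of_ne hi.1.ne' hk.1.ne']
  rcases eq_or_ne l i with rfl | hli
  · simp [hi, hk]
  rcases eq_or_ne l k with rfl | hlk
  · simp [hi, hk]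
  rw [Equiv.swap_apply_of_ne_of_ne hli hlk]

/-- The position in `smallerBefore j σ` of the largest value, with junk value `j` if there is no
such position. -/
noncomputable def topSmaller (j : ι) (σ : Equiv.Perm ι) : ι :=
  if h : (smallerBefore j σ).Nonempty then (exists_max_image _ σ h).choose else j

lemma topSmaller_mem (h : (smallerBefore j σ).Nonempty) :
    topSmaller j σ ∈ smallerBefore j σ := by
  rw [topSmaller, dif_pos h]
  exact (exists_max_image _ σ h).choose_spec.1

lemma apply_le_apply_topSmaller (hi : i ∈ smallerBefore j σ) : σ i ≤ σ (topSmaller j σ) := by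
  have h : (smallerBefore j σ).Nonempty := ⟨i, hi⟩
  rw [topSmaller, dif_pos h]
  exact (exists_max_image _ σ h).choose_spec.2 i hi

lemma topSmaller_eq (hi : i ∈ smallerBefore j σ) (hmax : ∀ l ∈ smallerBefore j σ, σ l ≤ σ i) :
    topSmaller j σ = i :=
  σ.injective (le_antisymm (hmax _ (topSmaller_mem ⟨i, hi⟩)) (apply_le_apply_topSmaller hi))

lemma topSmaller_mul_swap (hi : i ∈ smallerBefore j σ) :
    topSmaller j (σ * Equiv.swap i (topSmaller j σ)) = i := by
  have hs := topSmaller_mem ⟨i, hi⟩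
  have hL := smallerBefore_mul_swap hi hs
  refine topSmaller_eq (hL ▸ hi) fun l hl ↦ ?_
  rw [hL] at hl
  rw [Equiv.Perm.mul_apply, Equiv.Perm.mul_apply, Equiv.swap_apply_left]
  rcases eq_or_ne l i with rfl | hli
  · rw [Equiv.swap_apply_left]
  rcases eq_or_ne l (topSmaller j σ) with hls | hls
  · rw [hls, Equiv.swap_apply_right]
    exact apply_le_apply_topSmaller hi
  rw [Equiv.swap_apply_of_ne_of_ne hli hls]
  exact apply_le_apply_topSmaller hl

/-- The permutation obtained from `σ` by lowering its value at `j` to the next smaller value taken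
before `j`, the two values being swapped. It equals `σ` if there is no such value. -/
noncomputable def lowerAt (j : ι) (σ : Equiv.Perm ι) : Equiv.Perm ι :=
  σ * Equiv.swap j (topSmaller j σ)

lemma lowerAt_apply_self : lowerAt j σ j = σ (topSmaller j σ) := by
  simp [lowerAt]

lemma lowerAt_apply_topSmaller : lowerAt j σ (topSmaller j σ) = σ j := by
  simp [lowerAt]

lemma lowerAt_apply_of_ne (hj : i ≠ j) (hs : i ≠ topSmaller j σ) : lowerAt j σ i = σ i := by
  rw [lowerAt, Equiv.Perm.mul_apply, Equiv.swap_apply_of_ne_of_ne hj hs]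

lemma smallerBefore_lowerAt (h : (smallerBefore j σ).Nonempty) :
    smallerBefore j (lowerAt j σ) = (smallerBefore j σ).erase (topSmaller j σ) := by
  have hs := mem_smallerBefore.1 (topSmaller_mem h)
  ext l
  rw [mem_erase, mem_smallerBefore, lowerAt_apply_self]
  rcases eq_or_ne l (topSmaller j σ) with rfl | hls
  · simp [lowerAt_apply_topSmaller, hs.2.le]
  rcases eq_or_ne l j with rfl | hlj
  · simp [mem_smallerBefore]
  rw [lowerAt_apply_of_ne hlj hls]
  refine ⟨fun hl ↦ ⟨hls, mem_smallerBefore.2 ⟨hl.1, hl.2.trans hs.2⟩⟩, fun hl ↦ ?_⟩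
  exact ⟨(mem_smallerBefore.1 hl.2).1,
    (apply_le_apply_topSmaller hl.2).lt_of_ne (σ.injective.ne hl.1)⟩

lemma card_smallerBefore_lowerAt_add_one (h : (smallerBefore j σ).Nonempty) :
    #(smallerBefore j (lowerAt j σ)) + 1 = #(smallerBefore j σ) := by
  rw [smallerBefore_lowerAt h, card_erase_add_one (topSmaller_mem h)]

/- The position `topSmaller j σ`, and with it `σ`, can be read off `lowerAt j σ`: it carries the
next larger value. -/
lemma lowerAt_topSmaller_le (h : i < j) (hi : lowerAt j σ j < lowerAt j σ i) :
    lowerAt j σ (topSmaller j σ) ≤ lowerAt j σ i := by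
  rcases eq_or_ne i (topSmaller j σ) with rfl | his
  · exact le_rfl
  rw [lowerAt_apply_self, lowerAt_apply_of_ne h.ne his] at hi
  rw [lowerAt_apply_topSmaller, lowerAt_apply_of_ne h.ne his]
  by_contra! hij
  exact hi.not_ge (apply_le_apply_topSmaller (mem_smallerBefore.2 ⟨h, hij⟩))

lemma lowerAt_self_lt_topSmaller (h : (smallerBefore j σ).Nonempty) :
    lowerAt j σ j < lowerAt j σ (topSmaller j σ) := by
  rw [lowerAt_apply_self, lowerAt_apply_topSmaller]
  exact (mem_smallerBefore.1 (topSmaller_mem h)).2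

lemma lowerAt_injOn : Set.InjOn (lowerAt j) {σ | (smallerBefore j σ).Nonempty} := by
  intro σ hσ τ hτ hστ
  have htop : topSmaller j σ = topSmaller j τ := by
    refine (lowerAt j σ).injective (le_antisymm ?_ ?_)
    · refine lowerAt_topSmaller_le (mem_smallerBefore.1 (topSmaller_mem hτ)).1 ?_
      exact hστ ▸ lowerAt_self_lt_topSmaller hτ
    · rw [hστ]
      refine lowerAt_topSmaller_le (mem_smallerBefore.1 (topSmaller_mem hσ)).1 ?_
      exact hστ ▸ lowerAt_self_lt_topSmaller hσ
  rw [lowerAt, lowerAt, htop] at hστ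
  exact mul_right_cancel hστ

/-- The involution on pairs `(σ, i)` with `i ∈ smallerBefore j σ` that swaps the values at `i` and
at `topSmaller j σ`, after which `i` is the new `topSmaller`. -/
noncomputable def exchangeTop (j : ι) (x : (_ : Equiv.Perm ι) × ι) : (_ : Equiv.Perm ι) × ι :=
  ⟨x.1 * Equiv.swap x.2 (topSmaller j x.1), topSmaller j x.1⟩

lemma exchangeTop_mem {x : (_ : Equiv.Perm ι) × ι} (hx : x ∈ univ.sigma (smallerBefore j)) :
    exchangeTop j x ∈ univ.sigma (smallerBefore j) := by
  simp only [mem_sigma, mem_univ, true_and] at hx ⊢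
  have hs := topSmaller_mem ⟨_, hx⟩
  exact (smallerBefore_mul_swap hx hs).symm ▸ hs

lemma exchangeTop_exchangeTop {x : (_ : Equiv.Perm ι) × ι}
    (hx : x ∈ univ.sigma (smallerBefore j)) : exchangeTop j (exchangeTop j x) = x := by
  simp only [mem_sigma, mem_univ, true_and] at hx
  simp only [exchangeTop, topSmaller_mul_swap hx]
  rw [Equiv.swap_comm, mul_assoc, Equiv.swap_mul_self, mul_one]

end Positions

section PermMonomial

variable {R ι : Type*} [CommSemiring R]

section ScalarInequalities

variable [PartialOrder R] [IsOrderedRing R] {t y z : R} {a b c : ℕ}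

lemma pow_succ_mul_pow_le_pow_mul_pow_succ (ht : 0 ≤ t) (hty : t ≤ y) (hab : a < b) :
    y ^ (a + 1) * t ^ b ≤ y ^ b * t ^ (a + 1) := by
  obtain ⟨e, rfl⟩ := Nat.exists_eq_add_of_lt hab
  have hy := ht.trans hty
  calc y ^ (a + 1) * t ^ (a + e + 1) = (y * t) ^ (a + 1) * t ^ e := by ring
    _ ≤ (y * t) ^ (a + 1) * y ^ e := by gcongr
    _ = y ^ (a + e + 1) * t ^ (a + 1) := by ring

variable [ExistsAddOfLE R] [AddLeftReflectLE R]

lemma pow_succ_mul_pow_add_le (hy : 0 ≤ y) (hz : 0 ≤ z) (hyz : y ≤ z ∨ z ≤ y) (hab : a ≤ b) :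
    y ^ (a + 1) * z ^ b + y ^ b * z ^ (a + 1) ≤ y ^ a * z ^ (b + 1) + y ^ (b + 1) * z ^ a := by
  obtain ⟨e, rfl⟩ := Nat.exists_eq_add_of_le hab
  have key : y * z ^ e + z * y ^ e ≤ y * y ^ e + z * z ^ e := by
    rcases hyz with h | h
    · exact mul_add_mul_le_mul_add_mul h (pow_le_pow_left₀ hy h e)
    · exact mul_add_mul_le_mul_add_mul' h (pow_le_pow_left₀ hz h e)
  calc y ^ (a + 1) * z ^ (a + e) + y ^ (a + e) * z ^ (a + 1)
      = (y * z) ^ a * (y * z ^ e + z * y ^ e) := by ring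
    _ ≤ (y * z) ^ a * (y * y ^ e + z * z ^ e) := by gcongr
    _ = y ^ a * z ^ (a + e + 1) + y ^ (a + e + 1) * z ^ a := by ring

lemma pow_mul_pow_succ_mul_pow_add_le (ht : 0 ≤ t) (hty : t ≤ y) (htz : t ≤ z)
    (hyz : y ≤ z ∨ z ≤ y) (hac : a ≤ c) (hcb : c < b) :
    t ^ b * (y ^ (a + 1) * z ^ c + y ^ c * z ^ (a + 1)) ≤
      t ^ (c + 1) * (y ^ a * z ^ b + y ^ b * z ^ a) := by
  obtain ⟨e, rfl⟩ := Nat.exists_eq_add_of_lt hcb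
  have hy := ht.trans hty
  have hz := ht.trans htz
  calc t ^ (c + e + 1) * (y ^ (a + 1) * z ^ c + y ^ c * z ^ (a + 1))
      = t ^ (c + 1) * (y ^ (a + 1) * z ^ c * t ^ e + y ^ c * z ^ (a + 1) * t ^ e) := by ring
    _ ≤ t ^ (c + 1) * (y ^ (a + 1) * z ^ c * z ^ e + y ^ c * z ^ (a + 1) * y ^ e) := by gcongr
    _ = t ^ (c + 1) * (y ^ (a + 1) * z ^ (c + e) + y ^ (c + e) * z ^ (a + 1)) := by ring
    _ ≤ t ^ (c + 1) * (y ^ a * z ^ (c + e + 1) + y ^ (c + e + 1) * z ^ a) := by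
      gcongr ?_ * ?_
      exact pow_succ_mul_pow_add_le hy hz hyz (hac.trans (Nat.le_add_right c e))

end ScalarInequalities

/-- The monomial `∏ y_l ^ (c (σ l))`: with `y_l` the sum of the letters allowed in the `l`-th word,
it is the generating function of the tuples of words of lengths `c (σ l)`. -/
def permMonomial [Fintype ι] (c : ι → ℕ) (y : ι → R) (σ : Equiv.Perm ι) : R :=
  ∏ l, y l ^ c (σ l)

lemma permMonomial_eq_prod_mul_prod_compl [Fintype ι] [DecidableEq ι] (c : ι → ℕ) (y : ι → R)
    {σ τ : Equiv.Perm ι} {s : Finset ι} (h : ∀ l ∉ s, τ l = σ l) :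
    permMonomial c y τ = (∏ l ∈ s, y l ^ c (τ l)) * ∏ l ∈ sᶜ, y l ^ c (σ l) := by
  rw [permMonomial, ← prod_mul_prod_compl s]
  congr 1
  exact prod_congr rfl fun l hl ↦ by rw [h l (mem_compl.1 hl)]

variable [PartialOrder R] [IsOrderedRing R] [Fintype ι] {c : ι → ℕ} {y : ι → R}

lemma permMonomial_nonneg (c : ι → ℕ) (hy : ∀ l, 0 ≤ y l) (σ : Equiv.Perm ι) :
    0 ≤ permMonomial c y σ :=
  prod_nonneg fun l _ ↦ pow_nonneg (hy l) _

variable [LinearOrder ι] {σ : Equiv.Perm ι} {i j k : ι}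

lemma mul_permMonomial_le_swap (hc : StrictMono c) (hy : ∀ l, 0 ≤ y l) (hanti : Antitone y)
    (hij : i < j) (hσij : σ i < σ j) :
    y i * permMonomial c y σ ≤ y j * permMonomial c y (σ * Equiv.swap j i) := by
  have hswap : ∀ l ∉ ({i, j} : Finset ι), (σ * Equiv.swap j i) l = σ l := by
    intro l hl
    simp only [mem_insert, mem_singleton, not_or] at hl
    rw [Equiv.Perm.mul_apply, Equiv.swap_apply_of_ne_of_ne hl.2 hl.1]
  rw [permMonomial_eq_prod_mul_prod_compl c y fun l (_ : l ∉ ({i, j} : Finset ι)) ↦ rfl,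
    permMonomial_eq_prod_mul_prod_compl c y hswap]
  set q := ∏ l ∈ {i, j}ᶜ, y l ^ c (σ l)
  have hq : 0 ≤ q := prod_nonneg fun l _ ↦ pow_nonneg (hy l) _
  simp only [prod_pair hij.ne, Equiv.Perm.mul_apply, Equiv.swap_apply_left,
    Equiv.swap_apply_right]
  calc y i * (y i ^ c (σ i) * y j ^ c (σ j) * q)
      = y i ^ (c (σ i) + 1) * y j ^ c (σ j) * q := by ring
    _ ≤ y i ^ c (σ j) * y j ^ (c (σ i) + 1) * q := by
      gcongr ?_ * q
      exact pow_succ_mul_pow_le_pow_mul_pow_succ (hy j) (hanti hij.le) (hc hσij)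
    _ = y j * (y i ^ c (σ j) * y j ^ c (σ i) * q) := by ring

variable [ExistsAddOfLE R] [AddLeftReflectLE R]

lemma mul_permMonomial_add_le_swap (hc : StrictMono c) (hy : ∀ l, 0 ≤ y l) (hanti : Antitone y)
    (hij : i < j) (hkj : k < j) (hσik : σ i < σ k) (hσkj : σ k < σ j) :
    y i * permMonomial c y σ + y k * permMonomial c y (σ * Equiv.swap i k) ≤
      y j * permMonomial c y (σ * Equiv.swap j k) +
        y j * permMonomial c y (σ * Equiv.swap i k * Equiv.swap j i) := by
  have hik : i ≠ k := ne_of_apply_ne σ hσik.ne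
  have hsplit (τ : Equiv.Perm ι) (hτ : ∀ l, l ≠ i → l ≠ k → l ≠ j → τ l = σ l) :
      permMonomial c y τ = y i ^ c (τ i) * (y k ^ c (τ k) * y j ^ c (τ j)) *
        ∏ l ∈ {i, k, j}ᶜ, y l ^ c (σ l) := by
    rw [permMonomial_eq_prod_mul_prod_compl c y (s := {i, k, j}) (σ := σ) (by simpa using hτ),
      prod_insert (by simp [hik, hij.ne]), prod_pair hkj.ne]
  rw [hsplit σ fun _ _ _ _ ↦ rfl,
    hsplit (σ * Equiv.swap i k) fun l hi hk _ ↦ by simp [Equiv.swap_apply_of_ne_of_ne, hi, hk],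
    hsplit (σ * Equiv.swap j k) fun l _ hk hj ↦ by simp [Equiv.swap_apply_of_ne_of_ne, hj, hk],
    hsplit (σ * Equiv.swap i k * Equiv.swap j i) fun l hi hk hj ↦ by
      simp [Equiv.swap_apply_of_ne_of_ne, hi, hj, hk]]
  set q := ∏ l ∈ {i, k, j}ᶜ, y l ^ c (σ l)
  have hq : 0 ≤ q := prod_nonneg fun l _ ↦ pow_nonneg (hy l) _
  simp only [Equiv.Perm.mul_apply, Equiv.swap_apply_left, Equiv.swap_apply_right,
    Equiv.swap_apply_of_ne_of_ne hij.ne hik, Equiv.swap_apply_of_ne_of_ne hkj.ne hik.symm,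
    Equiv.swap_apply_of_ne_of_ne hij.ne' hkj.ne']
  have key := pow_mul_pow_succ_mul_pow_add_le (hy j) (hanti hij.le) (hanti hkj.le)
    ((le_total k i).imp (hanti ·) (hanti ·)) (hc hσik).le (hc hσkj)
  convert mul_le_mul_of_nonneg_right key hq using 1 <;> ring

/- The inequality can fail for `x` alone: if `c (σ j) = c (σ k) + 1` with `k = topSmaller j σ`, it
amounts to `y i ≤ y k`, hence the sum over an orbit of `exchangeTop`. -/
lemma mul_permMonomial_add_exchangeTop_le (hc : StrictMono c) (hy : ∀ l, 0 ≤ y l)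
    (hanti : Antitone y) {x : (_ : Equiv.Perm ι) × ι} (hx : x ∈ univ.sigma (smallerBefore j)) :
    y x.2 * permMonomial c y x.1 + y (exchangeTop j x).2 * permMonomial c y (exchangeTop j x).1 ≤
      y j * permMonomial c y (lowerAt j x.1) +
        y j * permMonomial c y (lowerAt j (exchangeTop j x).1) := by
  obtain ⟨σ, i⟩ := x
  simp only [mem_sigma, mem_univ, true_and] at hx
  have hi := mem_smallerBefore.1 hx
  have hs := mem_smallerBefore.1 (topSmaller_mem ⟨i, hx⟩)
  simp only [exchangeTop, lowerAt, topSmaller_mul_swap hx]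
  rcases eq_or_ne i (topSmaller j σ) with his | his
  · rw [← his, Equiv.swap_self, ← Equiv.Perm.one_def, mul_one]
    have := mul_permMonomial_le_swap hc hy hanti hi.1 hi.2
    exact add_le_add this this
  · exact mul_permMonomial_add_le_swap hc hy hanti hi.1 hs.1
      ((apply_le_apply_topSmaller hx).lt_of_ne (σ.injective.ne his)) hs.2

omit [ExistsAddOfLE R] [AddLeftReflectLE R] in
lemma sum_card_smallerBefore_nsmul_lowerAt_le (hy : ∀ l, 0 ≤ y l) (j : ι) :
    ∑ σ, #(smallerBefore j σ) • (y j * permMonomial c y (lowerAt j σ)) ≤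
      ∑ σ, (#(smallerBefore j σ) + 1) • (y j * permMonomial c y σ) := by
  set s : Finset (Equiv.Perm ι) := {σ | (smallerBefore j σ).Nonempty}
  have hinj : Set.InjOn (lowerAt j) (s : Set (Equiv.Perm ι)) := by
    simpa [s] using lowerAt_injOn
  calc ∑ σ, #(smallerBefore j σ) • (y j * permMonomial c y (lowerAt j σ))
      = ∑ σ ∈ s, #(smallerBefore j σ) • (y j * permMonomial c y (lowerAt j σ)) := by
        refine (sum_filter_of_ne fun σ _ hσ ↦ ?_).symm
        contrapose! hσ
        rw [hσ, card_empty, zero_nsmul]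
    _ = ∑ σ ∈ s, (#(smallerBefore j (lowerAt j σ)) + 1) •
          (y j * permMonomial c y (lowerAt j σ)) :=
        sum_congr rfl fun σ hσ ↦ by
          rw [card_smallerBefore_lowerAt_add_one (mem_filter.1 hσ).2]
    _ = ∑ τ ∈ s.image (lowerAt j), (#(smallerBefore j τ) + 1) • (y j * permMonomial c y τ) :=
        (sum_image (f := fun τ ↦ (#(smallerBefore j τ) + 1) • (y j * permMonomial c y τ)) hinj).symm
    _ ≤ ∑ σ, (#(smallerBefore j σ) + 1) • (y j * permMonomial c y σ) :=
        sum_le_sum_of_subset_of_nonneg (subset_univ _) fun τ _ _ ↦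
          nsmul_nonneg (mul_nonneg (hy j) (permMonomial_nonneg c hy τ)) _

lemma two_nsmul_sum_mul_permMonomial_le_lowerAt (hc : StrictMono c) (hy : ∀ l, 0 ≤ y l)
    (hanti : Antitone y) (j : ι) :
    2 • ∑ σ, ∑ i ∈ smallerBefore j σ, y i * permMonomial c y σ ≤
      2 • ∑ σ, #(smallerBefore j σ) • (y j * permMonomial c y (lowerAt j σ)) := by
  simp only [← sum_const]
  rw [← sum_sigma univ (smallerBefore j) fun x ↦ y x.2 * permMonomial c y x.1,
    ← sum_sigma univ (smallerBefore j) fun x ↦ y j * permMonomial c y (lowerAt j x.1)]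
  have hreindex (f : ((_ : Equiv.Perm ι) × ι) → R) :
      2 • ∑ x ∈ univ.sigma (smallerBefore j), f x =
        ∑ x ∈ univ.sigma (smallerBefore j), (f x + f (exchangeTop j x)) := by
    rw [sum_add_distrib, two_nsmul]
    congr 1
    exact sum_nbij' (exchangeTop j) (exchangeTop j) (fun _ ↦ exchangeTop_mem)
      (fun _ ↦ exchangeTop_mem) (fun _ ↦ exchangeTop_exchangeTop)
      (fun _ ↦ exchangeTop_exchangeTop) fun x hx ↦ by rw [exchangeTop_exchangeTop hx]
  rw [hreindex, hreindex]
  exact sum_le_sum fun x hx ↦ mul_permMonomial_add_exchangeTop_le hc hy hanti hx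

end PermMonomial

theorem two_nsmul_sum_sub_mul_permMonomial_le {R ι : Type*} [CommRing R] [PartialOrder R]
    [IsOrderedRing R] [LinearOrder ι] [Fintype ι] {c : ι → ℕ} {y : ι → R} (hc : StrictMono c)
    (hy : ∀ l, 0 ≤ y l) (hanti : Antitone y) (j : ι) :
    2 • ∑ σ, ∑ i ∈ smallerBefore j σ, (y i - y j) * permMonomial c y σ ≤
      2 • ∑ σ, y j * permMonomial c y σ := by
  have h := (two_nsmul_sum_mul_permMonomial_le_lowerAt hc hy hanti j).trans
    (nsmul_le_nsmul_right (sum_card_smallerBefore_nsmul_lowerAt_le hy j) 2)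
  simp only [add_nsmul, one_nsmul, sum_add_distrib, nsmul_add] at h
  simpa only [sub_mul, sum_sub_distrib, sum_const, nsmul_sub, sub_le_iff_le_add'] using h

section Words

variable {ι α R : Type*}

/-- The words of length `m` over the alphabet `S`. -/
def words (S : Finset α) (m : ℕ) : Finset (List α) :=
  (Fintype.piFinset fun _ : Fin m ↦ S).map ⟨List.ofFn, List.ofFn_injective⟩

lemma mem_words {S : Finset α} {m : ℕ} {w : List α} :
    w ∈ words S m ↔ w.length = m ∧ ∀ a ∈ w, a ∈ S := by
  simp only [words, mem_map, Fintype.mem_piFinset, Function.Embedding.coeFn_mk]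
  constructor
  · rintro ⟨p, hp, rfl⟩
    exact ⟨List.length_ofFn, List.forall_mem_ofFn_iff.2 hp⟩
  · rintro ⟨rfl, hw⟩
    exact ⟨w.get, fun i ↦ hw _ (w.get_mem i), List.ofFn_get w⟩

lemma sum_words_prod_map [CommSemiring R] (S : Finset α) (m : ℕ) (f : α → R) :
    ∑ w ∈ words S m, (w.map f).prod = (∑ a ∈ S, f a) ^ m := by
  simp [words, List.map_ofFn, List.prod_ofFn, Finset.sum_prod_piFinset]

variable [Fintype ι] [DecidableEq ι]

/-- The tuples of words of which the `l`-th has length `e l` and alphabet `S l`. -/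
def wordTuples (S : ι → Finset α) (e : ι → ℕ) : Finset (ι → List α) :=
  Fintype.piFinset fun l ↦ words (S l) (e l)

lemma mem_wordTuples {S : ι → Finset α} {e : ι → ℕ} {w : ι → List α} :
    w ∈ wordTuples S e ↔ (∀ l, (w l).length = e l) ∧ ∀ l, ∀ a ∈ w l, a ∈ S l := by
  simp only [wordTuples, Fintype.mem_piFinset, mem_words, forall_and]

lemma sum_wordTuples_prod_map [CommSemiring R] (S : ι → Finset α) (e : ι → ℕ) (f : α → R) :
    ∑ w ∈ wordTuples S e, ∏ l, ((w l).map f).prod = ∏ l, (∑ a ∈ S l, f a) ^ e l := by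
  simp only [wordTuples, ← sum_words_prod_map, prod_univ_sum]

variable [DecidableEq α]

/-- `k` is the deficit letter of `w` relative to `d`: adding one `k` to the letters of `w` gives
every letter `a` the multiplicity `d a`. -/
def IsDeficitLetter (d : α → ℕ) (w : ι → List α) (k : α) : Prop :=
  ∀ a, (∑ l, (w l).count a) + (if a = k then 1 else 0) = d a

omit [DecidableEq ι] in
lemma IsDeficitLetter.unique {d : α → ℕ} {w : ι → List α} {k k' : α}
    (h : IsDeficitLetter d w k) (h' : IsDeficitLetter d w k') : k = k' := by
  by_contra hne
  have hk := h k
  have hk' := h' k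
  rw [if_pos rfl] at hk
  rw [if_neg hne] at hk'
  omega

open Classical in
/-- The tuples in `wordTuples S e` with a deficit letter in `K`. -/
noncomputable def deficitTuples (d : α → ℕ) (S : ι → Finset α) (e : ι → ℕ) (K : Finset α) :
    Finset (ι → List α) :=
  {w ∈ wordTuples S e | ∃ k ∈ K, IsDeficitLetter d w k}

lemma mem_deficitTuples {d : α → ℕ} {S : ι → Finset α} {e : ι → ℕ} {K : Finset α}
    {w : ι → List α} : w ∈ deficitTuples d S e K ↔
      ((∀ l, (w l).length = e l) ∧ ∀ l, ∀ a ∈ w l, a ∈ S l) ∧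
        ∃ k ∈ K, IsDeficitLetter d w k := by
  classical
  rw [deficitTuples, mem_filter, mem_wordTuples]

end Words

section GeneratingFunction

open MvPolynomial

variable {ι α R : Type*} [Fintype ι] [DecidableEq α] [CommSemiring R]

lemma prod_map_X_eq_monomial (w : List α) :
    (w.map X).prod = (monomial (Multiset.toFinsupp (w : Multiset α)) 1 : MvPolynomial α R) := by
  induction w with
  | nil => simp
  | cons a w ih =>
    rw [List.map_cons, List.prod_cons, ih, X, monomial_mul, one_mul, ← Multiset.cons_coe,
      ← Multiset.singleton_add, map_add, Multiset.toFinsupp_singleton]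

variable [Finite α]

open Classical in
lemma coeff_X_mul_prod_map_X (d : α → ℕ) (k : α) (w : ι → List α) :
    coeff (Finsupp.equivFunOnFinite.symm d)
        (X k * ∏ l, ((w l).map X).prod : MvPolynomial α R) =
      if IsDeficitLetter d w k then 1 else 0 := by
  simp only [prod_map_X_eq_monomial]
  rw [← monomial_sum_one, X, monomial_mul, coeff_monomial, one_mul]
  refine if_congr ?_ rfl rfl
  simp [Finsupp.ext_iff, IsDeficitLetter, Finsupp.single_apply, add_comm, eq_comm]

lemma coeff_sum_X_mul_prod_pow [DecidableEq ι] (d : α → ℕ) (S : ι → Finset α) (e : ι → ℕ)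
    (K : Finset α) :
    coeff (Finsupp.equivFunOnFinite.symm d)
        ((∑ k ∈ K, X k) * ∏ l, (∑ a ∈ S l, X a) ^ e l : MvPolynomial α R) =
      #(deficitTuples d S e K) := by
  classical
  have hletters (w : ι → List α) : ∑ k ∈ K, (if IsDeficitLetter d w k then 1 else 0 : R) =
      if ∃ k ∈ K, IsDeficitLetter d w k then 1 else 0 := by
    split_ifs with h
    · obtain ⟨k, hk, hw⟩ := h
      rw [sum_eq_single_of_mem k hk fun k' _ hne ↦ if_neg fun h' ↦ hne (h'.unique hw), if_pos hw]
    · exact sum_eq_zero fun k hk ↦ if_neg fun hw ↦ h ⟨k, hk, hw⟩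
  rw [← sum_wordTuples_prod_map, sum_mul_sum, sum_comm]
  simp only [coeff_sum, coeff_X_mul_prod_map_X, hletters]
  rw [sum_boole, deficitTuples]

/-- The coefficientwise order on polynomials. -/
abbrev coeffwiseOrder (α R : Type*) [CommSemiring R] [PartialOrder R] :
    PartialOrder (MvPolynomial α R) :=
  PartialOrder.lift (fun p m ↦ coeff m p) fun _ _ h ↦ MvPolynomial.ext _ _ (congrFun h)

attribute [local instance] coeffwiseOrder

lemma isOrderedRing_coeffwiseOrder (α R : Type*) [CommSemiring R] [PartialOrder R]
    [IsOrderedRing R] : IsOrderedRing (MvPolynomial α R) := by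
  classical
  have hmul (p q r : MvPolynomial α R) (hp : 0 ≤ p) (hqr : q ≤ r) : p * q ≤ p * r := by
    intro m
    simp only [coeff_mul]
    exact sum_le_sum fun x _ ↦ mul_le_mul_of_nonneg_left (hqr x.2) (hp x.1)
  exact {
    add_le_add_left := fun p q h r m ↦ by
      simpa only [coeff_add] using add_le_add_left (h m) (coeff m r)
    zero_le_one := fun m ↦ by
      simp only [coeff_zero, coeff_one]
      split_ifs
      exacts [zero_le_one, le_rfl]
    mul_le_mul_of_nonneg_left := fun p hp q r h ↦ hmul p q r hp h
    mul_le_mul_of_nonneg_right := fun p hp q r h ↦ by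
      simpa only [mul_comm _ p] using hmul p q r hp h }

omit [Finite α] [DecidableEq α] in
lemma coeffwise_X_nonneg [PartialOrder R] [ZeroLEOneClass R] (a : α) :
    (0 : MvPolynomial α R) ≤ X a := by
  classical
  intro m
  simp only [coeff_zero, coeff_X]
  split_ifs
  exacts [zero_le_one, le_rfl]

theorem sum_card_deficitTuples_sdiff_le [LinearOrder ι] {c : ι → ℕ} (hc : StrictMono c)
    {S : ι → Finset α} (hS : Antitone S) (d : α → ℕ) (j : ι) :
    ∑ σ, ∑ i ∈ smallerBefore j σ, #(deficitTuples d S (fun l ↦ c (σ l)) (S i \ S j)) ≤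
      ∑ σ : Equiv.Perm ι, #(deficitTuples d S (fun l ↦ c (σ l)) (S j)) := by
  have := isOrderedRing_coeffwiseOrder α ℤ
  set y : ι → MvPolynomial α ℤ := fun l ↦ ∑ a ∈ S l, X a with hy
  have hy0 (l : ι) : 0 ≤ y l := sum_nonneg fun a _ ↦ coeffwise_X_nonneg a
  have hanti : Antitone y := fun i k hik ↦
    sum_le_sum_of_subset_of_nonneg (hS hik) fun a _ _ ↦ coeffwise_X_nonneg a
  have hsub (σ : Equiv.Perm ι) (i : ι) (hi : i ∈ smallerBefore j σ) :
      y i - y j = ∑ a ∈ S i \ S j, X a :=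
    (sum_sdiff_eq_sub (hS (mem_smallerBefore.1 hi).1.le)).symm
  have h := two_nsmul_sum_sub_mul_permMonomial_le hc hy0 hanti j
    (Finsupp.equivFunOnFinite.symm d)
  rw [sum_congr rfl fun σ _ ↦ sum_congr rfl fun i hi ↦ by rw [hsub σ i hi]] at h
  simp only [hy, permMonomial, coeff_smul, coeff_sum, coeff_sum_X_mul_prod_pow] at h
  exact_mod_cast (nsmul_le_nsmul_iff_right two_ne_zero).1 h

end GeneratingFunction

section Cardinalities

variable {n : ℕ} (j : Fin n) (d : Fin n → ℕ)

lemma Aset_eq_biUnion_deficitTuples :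
    Aset n j d = (univ.biUnion fun σ ↦ (smallerBefore j σ).biUnion fun i ↦
      deficitTuples d Ici (fun l ↦ (σ l : ℕ)) (Ici i \ Ici j) ×ˢ {i} :
        Finset ((Fin n → List (Fin n)) × Fin n)) := by
  ext ⟨w, i⟩
  simp only [Aset, Set.mem_ofPred_eq, mem_coe, mem_biUnion, mem_univ, true_and, mem_product,
    mem_singleton, mem_deficitTuples, mem_sdiff, mem_Ici, not_le, mem_smallerBefore]
  constructor
  · rintro ⟨hij, hletters, ⟨σ, hσ⟩, hlt, k, hik, hkj, hk⟩
    rw [hσ, hσ, Fin.val_fin_lt] at hlt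
    exact ⟨σ, i, ⟨hij, hlt⟩, ⟨⟨hσ, hletters⟩, k, ⟨hik, hkj⟩, hk⟩, rfl⟩
  · rintro ⟨σ, i, ⟨hij, hlt⟩, ⟨⟨hσ, hletters⟩, k, ⟨hik, hkj⟩, hk⟩, rfl⟩
    rw [← Fin.val_fin_lt, ← hσ, ← hσ] at hlt
    exact ⟨hij, hletters, ⟨σ, hσ⟩, hlt, k, hik, hkj, hk⟩

lemma Bset_eq_biUnion_deficitTuples :
    Bset n j d = (univ.biUnion fun σ : Equiv.Perm (Fin n) ↦
      deficitTuples d Ici (fun l ↦ (σ l : ℕ)) (Ici j) : Finset (Fin n → List (Fin n))) := by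
  ext w
  simp only [Bset, Set.mem_ofPred_eq, mem_coe, mem_biUnion, mem_univ, true_and,
    mem_deficitTuples, mem_Ici]
  constructor
  · rintro ⟨hletters, ⟨σ, hσ⟩, hk⟩
    exact ⟨σ, ⟨hσ, hletters⟩, hk⟩
  · rintro ⟨σ, ⟨hσ, hletters⟩, hk⟩
    exact ⟨hletters, ⟨σ, hσ⟩, hk⟩

lemma finite_Aset : (Aset n j d).Finite :=
  Aset_eq_biUnion_deficitTuples j d ▸ finite_toSet _

lemma finite_Bset : (Bset n j d).Finite :=
  Bset_eq_biUnion_deficitTuples j d ▸ finite_toSet _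

lemma card_Aset_le : Nat.card (Aset n j d) ≤ ∑ σ, ∑ i ∈ smallerBefore j σ,
    #(deficitTuples d Ici (fun l ↦ (σ l : ℕ)) (Ici i \ Ici j)) := by
  rw [Aset_eq_biUnion_deficitTuples, Nat.card_coe_set_eq, Set.ncard_coe_finset]
  refine card_biUnion_le.trans (sum_le_sum fun σ _ ↦ ?_)
  refine card_biUnion_le.trans (sum_le_sum fun i _ ↦ ?_)
  rw [card_product, card_singleton, mul_one]

lemma card_Bset : Nat.card (Bset n j d) = ∑ σ : Equiv.Perm (Fin n),
    #(deficitTuples d Ici (fun l ↦ (σ l : ℕ)) (Ici j)) := by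
  rw [Bset_eq_biUnion_deficitTuples, Nat.card_coe_set_eq, Set.ncard_coe_finset]
  refine card_biUnion fun σ _ τ _ hστ ↦ disjoint_left.2 fun w hσ hτ ↦ hστ ?_
  rw [mem_deficitTuples] at hσ hτ
  ext l
  rw [← hσ.1.1 l, hτ.1.1 l]

end Cardinalities

/-- There is an injection `f : A → B`; consequently `|A| ≤ |B|`. -/
theorem stmt10 (n : ℕ) (hn : 2 ≤ n) (j : Fin n) (hj : 1 ≤ (j : ℕ))
    (d : Fin n → ℕ) (hd : ∑ l, d l = n.choose 2 + 1) :
    (∃ f : Aset n j d → Bset n j d, Function.Injective f) ∧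
      Nat.card (Aset n j d) ≤ Nat.card (Bset n j d) := by
  have hle : Nat.card (Aset n j d) ≤ Nat.card (Bset n j d) := by
    rw [card_Bset]
    exact (card_Aset_le j d).trans
      (sum_card_deficitTuples_sdiff_le Fin.val_strictMono (fun _ _ ↦ Ici_subset_Ici.2) d j)
  have := (finite_Aset j d).fintype
  have := (finite_Bset j d).fintype
  obtain ⟨f⟩ : Nonempty (Aset n j d ↪ Bset n j d) :=
    Function.Embedding.nonempty_of_card_le (by simpa only [Nat.card_eq_fintype_card] using hle)
  exact ⟨⟨f, f.injective⟩, hle⟩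
end

section
/- Let p_1 ≥ p_2 ≥ … ≥ p_n > 0 with ∑_i p_i = 1 and let Q be the stationary distribution of the Transposition chain, Q(π) ∝ ∏_i p_i^{n−π(i)}. Then for every j ∈ {2,…,n}, s_j := ∑_{i=1}^{j−1}(p_i − p_j)·P_{π∼Q}[π(j) < π(i)] ≤ p_j. Consequently, the stationary expected access cost E_{π∼Q}[∑_i p_i π(i)] is at most OPT(p) + 1, where OPT(p) = ∑_{i=1}^n i·p_i. -/
open Finset

/-!
Fix `j` and write `d` for the distance between `j` and an item `i` standing in front of it.
Exchanging the two multiplies the stationary weight by `(p j / p i) ^ d`, so with `r = p j / p i`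
the probability that `j` precedes `i` is the expectation of `r ^ d` over the lists in which `i`
precedes `j`, and `(p i - p j) * r ^ d = p j * (r ^ (d - 1) - r ^ d)`. Summed over all items in
front of `j`, the bracket would telescope if `r` did not change from one position to the next.
It does change, but exchanging two neighbours shows that the more frequent one, whose `r` is
smaller, tends to stand first; in expectation the sum is therefore at most the telescoped value `1`.

The total cost of a list exceeds that of a reference list by `p i - p j` for every inverted pair,
and `∑ j, p j` bounds the expectation of the sum of these.
-/

section TranspositionChain

open Equiv (Perm swap)

variable {n : ℕ} {K : Type*}

/-- The unnormalised stationary weight of the Transposition chain with request probabilities `p`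
at the list in which item `i` stands at the 0-indexed position `π i`. -/
def transpositionWeight [CommMonoid K] (p : Fin n → K) (π : Perm (Fin n)) : K :=
  ∏ i, p i ^ (n - 1 - (π i : ℕ))

lemma transpositionWeight_mul_swap_mul_pow [CommMonoid K] (p : Fin n → K) {π : Perm (Fin n)}
    {i j : Fin n} (h : π i ≤ π j) :
    transpositionWeight p (π * swap i j) * p i ^ ((π j : ℕ) - π i)
      = transpositionWeight p π * p j ^ ((π j : ℕ) - π i) := by
  have pow_eq_prod (c : Fin n) (d : ℕ) : p c ^ d = ∏ k, p k ^ (if k = c then d else 0) := by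
    simp [pow_ite]
  rw [pow_eq_prod i, pow_eq_prod j, transpositionWeight, transpositionWeight,
    ← prod_mul_distrib, ← prod_mul_distrib]
  refine prod_congr rfl fun k _ => ?_
  rw [← pow_add, ← pow_add, Equiv.Perm.mul_apply, Equiv.swap_apply_def]
  have hle : (π i : ℕ) ≤ π j := h
  have hlt := (π j).isLt
  congr 1
  split_ifs <;> subst_vars <;> omega

/-- The expected cost of one access to the list `π`; an access to the 0-indexed position `q`
costs `q + 1`. -/
def accessCost [Semiring K] (p : Fin n → K) (π : Perm (Fin n)) : K :=
  ∑ i, p i * ((π i : ℕ) + 1 : K)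

lemma natCast_apply_eq_sum [AddCommMonoidWithOne K] (π : Perm (Fin n)) (i : Fin n) :
    ((π i : ℕ) : K) = ∑ k, if π k < π i then 1 else 0 := by
  rw [Equiv.sum_comp π fun q => if q < π i then (1 : K) else 0, sum_boole, filter_gt_eq_Iio,
    Fin.card_Iio]

lemma accessCost_sub_accessCost [Ring K] (p : Fin n → K) (π τ : Perm (Fin n)) :
    accessCost p π - accessCost p τ
      = ∑ j, ∑ i with τ i < τ j, (p i - p j) * if π j < π i then 1 else 0 := by
  let inv (i j : Fin n) : K := if τ i < τ j ∧ π j < π i then 1 else 0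
  have inv_sub_inv (i j : Fin n) :
      inv i j - inv j i = (if π j < π i then 1 else 0) - if τ j < τ i then 1 else 0 := by
    rcases eq_or_ne i j with rfl | hij
    · simp [inv]
    · have hπ := π.injective.ne hij
      have hτ := τ.injective.ne hij
      rcases hπ.lt_or_gt with h | h <;> rcases hτ.lt_or_gt with h' | h' <;>
        simp [inv, h, h', h.not_gt, h'.not_gt]
  calc accessCost p π - accessCost p τ
      = ∑ i, p i * (((π i : ℕ) : K) - (τ i : ℕ)) := by
        simp only [accessCost, ← sum_sub_distrib]
        exact sum_congr rfl fun i _ => by rw [← mul_sub, add_sub_add_right_eq_sub]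
    _ = ∑ i, ∑ j, p i * (inv i j - inv j i) := by
        simp only [natCast_apply_eq_sum, inv_sub_inv, ← sum_sub_distrib, mul_sum]
    _ = ∑ i, ∑ j, p i * inv i j - ∑ i, ∑ j, p i * inv j i := by
        simp only [mul_sub, sum_sub_distrib]
    _ = ∑ j, ∑ i, p i * inv i j - ∑ j, ∑ i, p j * inv i j := by
        rw [sum_comm]
    _ = ∑ j, ∑ i, (p i - p j) * inv i j := by
        simp only [sub_mul, sum_sub_distrib]
    _ = ∑ j, ∑ i with τ i < τ j, (p i - p j) * if π j < π i then 1 else 0 := by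
        simp only [inv, ite_and, sum_filter, mul_ite, mul_zero]

variable [Field K]

/-- The stationary distribution of the Transposition chain, given by its product formula. -/
def stationaryDist (p : Fin n → K) (π : Perm (Fin n)) : K :=
  transpositionWeight p π / ∑ σ, transpositionWeight p σ

/-- The stationary probability that item `j` stands in front of item `i`. -/
def precedenceProb (p : Fin n → K) (j i : Fin n) : K :=
  ∑ π, stationaryDist p π * if π j < π i then 1 else 0

lemma stationaryDist_mul_swap {p : Fin n → K} {π : Perm (Fin n)} {i j : Fin n}
    (hi : p i ≠ 0) (h : π i ≤ π j) :
    stationaryDist p (π * swap i j) = stationaryDist p π * (p j / p i) ^ ((π j : ℕ) - π i) := by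
  rw [stationaryDist, stationaryDist, div_pow, div_mul_div_comm, mul_comm (∑ σ, _),
    ← div_div, ← transpositionWeight_mul_swap_mul_pow p h,
    mul_div_cancel_right₀ _ (pow_ne_zero _ hi)]

lemma precedenceProb_eq_sum_mul_div_pow {p : Fin n → K} {i : Fin n} (hi : p i ≠ 0) (j : Fin n) :
    precedenceProb p j i
      = ∑ π, stationaryDist p π * if π i < π j then (p j / p i) ^ ((π j : ℕ) - π i) else 0 := by
  rw [precedenceProb, ← Equiv.sum_comp (Equiv.mulRight (swap i j))]
  refine sum_congr rfl fun π _ => ?_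
  simp only [Equiv.coe_mulRight, Equiv.Perm.mul_apply, Equiv.swap_apply_left,
    Equiv.swap_apply_right]
  split_ifs with h
  · rw [stationaryDist_mul_swap hi h.le, mul_one]
  · simp only [mul_zero]

variable [LinearOrder K] {p : Fin n → K}

/-- The factor by which the stationary weight changes, per position between them, when `j` is
exchanged with a more frequent item `i` in front of it. The cap at `1` makes its powers decrease
also when `i` is less frequent than `j`, so that sums over some of the items may be extended to
all of them. -/
def cappedRatio (p : Fin n → K) (j i : Fin n) : K := min 1 (p j / p i)

lemma cappedRatio_le_one (p : Fin n → K) (j i : Fin n) : cappedRatio p j i ≤ 1 :=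
  min_le_left _ _

/-- The decrease of the power of `cappedRatio p j i` when its exponent is raised by one to the
distance from `i` to `j` in the list `π`. By truncated subtraction it is `0` unless `i`
stands in front of `j`. -/
def ratioDrop (p : Fin n → K) (j : Fin n) (π : Perm (Fin n)) (i : Fin n) : K :=
  cappedRatio p j i ^ ((π j : ℕ) - (π i + 1)) - cappedRatio p j i ^ ((π j : ℕ) - π i)

variable [IsStrictOrderedRing K]

lemma cappedRatio_pos (hpos : ∀ i, 0 < p i) (j i : Fin n) : 0 < cappedRatio p j i :=
  lt_min one_pos (div_pos (hpos j) (hpos i))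

lemma antivary_cappedRatio_pow (hpos : ∀ i, 0 < p i) (j : Fin n) (k : ℕ) :
    Antivary (fun i => cappedRatio p j i ^ k) p := fun a b hab =>
  pow_le_pow_left₀ (cappedRatio_pos hpos j b).le
    (min_le_min_left 1 (div_le_div_of_nonneg_left (hpos j).le (hpos a) hab.le)) k

lemma ratioDrop_nonneg (hpos : ∀ i, 0 < p i) (j : Fin n) (π : Perm (Fin n)) (i : Fin n) :
    0 ≤ ratioDrop p j π i :=
  sub_nonneg.2 <| pow_le_pow_of_le_one (cappedRatio_pos hpos j i).le (cappedRatio_le_one p j i) <|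
    Nat.sub_le_sub_left (Nat.le_succ _) _

lemma transpositionWeight_pos (hpos : ∀ i, 0 < p i) (π : Perm (Fin n)) :
    0 < transpositionWeight p π :=
  prod_pos fun i _ => pow_pos (hpos i) _

lemma sum_transpositionWeight_pos (hpos : ∀ i, 0 < p i) : 0 < ∑ π, transpositionWeight p π :=
  sum_pos (fun π _ => transpositionWeight_pos hpos π) univ_nonempty

lemma stationaryDist_pos (hpos : ∀ i, 0 < p i) (π : Perm (Fin n)) : 0 < stationaryDist p π :=
  div_pos (transpositionWeight_pos hpos π) (sum_transpositionWeight_pos hpos)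

lemma sum_stationaryDist (hpos : ∀ i, 0 < p i) : ∑ π, stationaryDist p π = 1 := by
  simp only [stationaryDist]
  rw [← sum_div, div_self (sum_transpositionWeight_pos hpos).ne']

lemma sum_stationaryDist_mul_symm_le (hpos : ∀ i, 0 < p i) {u v : Fin n} (huv : (u : ℕ) + 1 = v)
    {f : Perm (Fin n) → Fin n → K} (hf : ∀ π, Antivary (f π) p)
    (hswap : ∀ π, f (swap u v * π) = f π) :
    ∑ π, stationaryDist p π * f π (π.symm u) ≤ ∑ π, stationaryDist p π * f π (π.symm v) := by
  let g (π : Perm (Fin n)) : K := stationaryDist p π * (f π (π.symm u) - f π (π.symm v))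
  have pair_nonpos (π : Perm (Fin n)) : g π + g (swap u v * π) ≤ 0 := by
    obtain ⟨a, rfl⟩ := π.surjective u
    obtain ⟨b, rfl⟩ := π.surjective v
    have hexp : (π b : ℕ) - π a = 1 := by omega
    have hQ : stationaryDist p (swap (π a) (π b) * π) = stationaryDist p π * (p b / p a) := by
      rw [← Equiv.mul_swap_eq_swap_mul,
        stationaryDist_mul_swap (hpos a).ne' (Fin.le_def.2 (by omega)), hexp, pow_one]
    have hsymm (q : Fin n) :
        (swap (π a) (π b) * π).symm q = π.symm (swap (π a) (π b) q) := rfl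
    have ha := (hpos a).ne'
    calc g π + g (swap (π a) (π b) * π)
        = stationaryDist p π / p a * ((f π b - f π a) * (p b - p a)) := by
          simp only [g, hQ, hswap, hsymm, Equiv.swap_apply_left, Equiv.swap_apply_right,
            Equiv.symm_apply_apply]
          field_simp
          ring
      _ ≤ 0 := mul_nonpos_of_nonneg_of_nonpos (div_pos (stationaryDist_pos hpos π) (hpos a)).le
          (antivary_iff_forall_mul_nonpos.1 (hf π) a b)
  have reindex : ∑ π, g (swap u v * π) = ∑ π, g π := Equiv.sum_comp (Equiv.mulLeft (swap u v)) g
  have hsum : ∑ π, g π ≤ 0 := by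
    have h := sum_nonpos fun π (_ : π ∈ univ) => pair_nonpos π
    rw [sum_add_distrib, reindex] at h
    linarith
  rw [← sub_nonpos, ← sum_sub_distrib]
  simpa only [g, mul_sub] using hsum

lemma sum_stationaryDist_mul_cappedRatio_pow_le (hpos : ∀ i, 0 < p i) (j : Fin n) {u v : Fin n}
    (huv : (u : ℕ) + 1 = v) :
    ∑ π, stationaryDist p π * cappedRatio p j (π.symm u) ^ ((π j : ℕ) - v)
      ≤ ∑ π, stationaryDist p π * cappedRatio p j (π.symm v) ^ ((π j : ℕ) - v) := by
  refine sum_stationaryDist_mul_symm_le hpos huv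
    (f := fun π i => cappedRatio p j i ^ ((π j : ℕ) - v))
    (fun π => antivary_cappedRatio_pow hpos j _) fun π => ?_
  have hexp : ((swap u v * π) j : ℕ) - v = (π j : ℕ) - v := by
    rw [Equiv.Perm.mul_apply, Equiv.swap_apply_def]
    split_ifs <;> simp_all <;> omega
  simp only [hexp]

lemma sum_stationaryDist_mul_sum_ratioDrop_le_one (hpos : ∀ i, 0 < p i) (j : Fin n) :
    ∑ π, stationaryDist p π * ∑ i, ratioDrop p j π i ≤ 1 := by
  obtain _ | m := n
  · exact j.elim0
  let A (q : Fin (m + 1)) : K :=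
    ∑ π, stationaryDist p π * cappedRatio p j (π.symm q) ^ ((π j : ℕ) - (q + 1))
  let B (q : Fin (m + 1)) : K :=
    ∑ π, stationaryDist p π * cappedRatio p j (π.symm q) ^ ((π j : ℕ) - q)
  have step (q : Fin m) : A q.castSucc ≤ B q.succ := by
    simpa [A, B] using sum_stationaryDist_mul_cappedRatio_pow_le hpos j
      (u := q.castSucc) (v := q.succ) (by simp)
  have last : A (Fin.last m) = 1 := by
    have hexp (π : Perm (Fin (m + 1))) : (π j : ℕ) - (m + 1) = 0 := by omega
    simp [A, hexp, sum_stationaryDist hpos]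
  have first : 0 ≤ B 0 := sum_nonneg fun π _ =>
    mul_nonneg (stationaryDist_pos hpos π).le (pow_nonneg (cappedRatio_pos hpos j _).le _)
  calc ∑ π, stationaryDist p π * ∑ i, ratioDrop p j π i
      = ∑ q, A q - ∑ q, B q := by
        simp only [A, B]
        rw [sum_comm, sum_comm (s := univ (α := Fin (m + 1))), ← sum_sub_distrib]
        refine sum_congr rfl fun π _ => ?_
        rw [← Equiv.sum_comp π.symm]
        simp only [ratioDrop, Equiv.apply_symm_apply, sum_sub_distrib, mul_sub, mul_sum]
    _ = ∑ q : Fin m, (A q.castSucc - B q.succ) + (A (Fin.last m) - B 0) := by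
        rw [Fin.sum_univ_castSucc, Fin.sum_univ_succ B, sum_sub_distrib]
        ring
    _ ≤ 0 + (1 - 0) :=
        add_le_add (sum_nonpos fun q _ => sub_nonpos.2 (step q)) (sub_le_sub last.le first)
    _ = 1 := by ring

lemma sub_mul_div_pow_succ_le (hpos : ∀ i, 0 < p i) (j i : Fin n) (d : ℕ) :
    (p i - p j) * (p j / p i) ^ (d + 1)
      ≤ p j * (cappedRatio p j i ^ d - cappedRatio p j i ^ (d + 1)) := by
  have hi := hpos i
  rcases le_total (p j) (p i) with h | h
  · have hratio : cappedRatio p j i = p j / p i := min_eq_right ((div_le_one hi).2 h)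
    rw [hratio, pow_succ]
    refine le_of_eq ?_
    field_simp
  · have hratio : cappedRatio p j i = 1 := min_eq_left ((one_le_div hi).2 h)
    simpa only [hratio, one_pow, sub_self, mul_zero] using mul_nonpos_of_nonpos_of_nonneg
      (sub_nonpos.2 h) (pow_nonneg (div_pos (hpos j) hi).le (d + 1))

lemma sub_mul_precedenceProb_le (hpos : ∀ i, 0 < p i) (j i : Fin n) :
    (p i - p j) * precedenceProb p j i
      ≤ p j * ∑ π, stationaryDist p π * ratioDrop p j π i := by
  rw [precedenceProb_eq_sum_mul_div_pow (hpos i).ne', mul_sum, mul_sum]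
  refine sum_le_sum fun π _ => ?_
  rw [mul_left_comm, mul_left_comm (p j)]
  refine mul_le_mul_of_nonneg_left ?_ (stationaryDist_pos hpos π).le
  split_ifs with h
  · have hexp : (π j : ℕ) - π i = (π j : ℕ) - (π i + 1) + 1 := by
      have : (π i : ℕ) < π j := h
      omega
    rw [ratioDrop, hexp]
    exact sub_mul_div_pow_succ_le hpos j i _
  · have hle : (π j : ℕ) ≤ π i := not_lt.1 h
    simp [ratioDrop, Nat.sub_eq_zero_of_le hle, Nat.sub_eq_zero_of_le (hle.trans (Nat.le_succ _))]

lemma sum_sub_mul_precedenceProb_le (hpos : ∀ i, 0 < p i) (j : Fin n) (S : Finset (Fin n)) :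
    ∑ i ∈ S, (p i - p j) * precedenceProb p j i ≤ p j := by
  calc ∑ i ∈ S, (p i - p j) * precedenceProb p j i
      ≤ ∑ i ∈ S, p j * ∑ π, stationaryDist p π * ratioDrop p j π i :=
        sum_le_sum fun i _ => sub_mul_precedenceProb_le hpos j i
    _ ≤ ∑ i, p j * ∑ π, stationaryDist p π * ratioDrop p j π i :=
        sum_le_univ_sum_of_nonneg fun i => mul_nonneg (hpos j).le <|
          sum_nonneg fun π _ =>
            mul_nonneg (stationaryDist_pos hpos π).le (ratioDrop_nonneg hpos j π i)
    _ = p j * ∑ π, stationaryDist p π * ∑ i, ratioDrop p j π i := by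
        rw [← mul_sum, sum_comm]
        simp only [mul_sum]
    _ ≤ p j := mul_le_of_le_one_right (hpos j).le
        (sum_stationaryDist_mul_sum_ratioDrop_le_one hpos j)

lemma sum_stationaryDist_mul_accessCost (hpos : ∀ i, 0 < p i) (τ : Perm (Fin n)) :
    ∑ π, stationaryDist p π * accessCost p π
      = accessCost p τ + ∑ j, ∑ i with τ i < τ j, (p i - p j) * precedenceProb p j i := by
  have hexcess : ∑ π, stationaryDist p π * (accessCost p π - accessCost p τ)
      = ∑ j, ∑ i with τ i < τ j, (p i - p j) * precedenceProb p j i := by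
    simp only [accessCost_sub_accessCost, precedenceProb, mul_sum]
    rw [sum_comm]
    refine sum_congr rfl fun j _ => ?_
    rw [sum_comm]
    exact sum_congr rfl fun i _ => sum_congr rfl fun π _ => mul_left_comm _ _ _
  rw [← hexcess]
  simp only [mul_sub, sum_sub_distrib, ← sum_mul, sum_stationaryDist hpos, one_mul,
    add_sub_cancel]

theorem stmt18_general (hpos : ∀ i, 0 < p i) :
    (∀ (j : Fin n) (S : Finset (Fin n)), ∑ i ∈ S, (p i - p j) * precedenceProb p j i ≤ p j) ∧
      ∀ τ : Perm (Fin n),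
        ∑ π, stationaryDist p π * accessCost p π ≤ accessCost p τ + ∑ j, p j := by
  refine ⟨sum_sub_mul_precedenceProb_le hpos, fun τ => ?_⟩
  rw [sum_stationaryDist_mul_accessCost hpos τ]
  gcongr with j
  exact sum_sub_mul_precedenceProb_le hpos j _

end TranspositionChain

/-- main theorem: for the stationary distribution
`Q(π) ∝ ∏ p_i^{n−π(i)}` of the Transposition chain, `s_j ≤ p_j` for every
`j ∈ {2,…,n}`, and consequently the stationary expected access cost is at most
`OPT(p) + 1`.  Positions are 0-indexed: the cost of item `i` is `(π i) + 1`. -/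
theorem stmt18 (n : ℕ) (hn : 1 ≤ n) (p : Fin n → ℝ)
    (hpos : ∀ i, 0 < p i) (hmono : ∀ a b : Fin n, a ≤ b → p b ≤ p a)
    (hsum : ∑ i, p i = 1)
    (Z : ℝ) (hZ : Z = ∑ σ : Equiv.Perm (Fin n), ∏ i, p i ^ (n - 1 - (σ i : ℕ)))
    (Q : Equiv.Perm (Fin n) → ℝ)
    (hQ : ∀ π : Equiv.Perm (Fin n), Q π = (∏ i, p i ^ (n - 1 - (π i : ℕ))) / Z) :
    (∀ j : Fin n, 1 ≤ (j : ℕ) →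
      ∑ i ∈ Finset.Iio j,
          (p i - p j) * (∑ π : Equiv.Perm (Fin n), Q π * if π j < π i then 1 else 0)
        ≤ p j) ∧
    (∑ π : Equiv.Perm (Fin n), Q π * ∑ i, p i * ((π i : ℕ) + 1 : ℝ))
      ≤ (∑ i : Fin n, ((i : ℕ) + 1 : ℝ) * p i) + 1 := by
  obtain rfl : Q = stationaryDist p := funext fun π => by rw [hQ, hZ]; rfl
  obtain ⟨hS, hcost⟩ := stmt18_general hpos
  refine ⟨fun j _ => hS j (Iio j), (hcost 1).trans_eq ?_⟩
  simp only [accessCost, hsum, Equiv.Perm.one_apply, mul_comm]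
end

section
/- Let p_1 ≥ p_2 ≥ … ≥ p_n > 0 be arbitrary positive strengths (not necessarily summing to 1), and let Q(π) ∝ ∏_i p_i^{n−π(i)} be the stationary distribution of the gladiator chain on S_n. Then for every j ∈ [n], E_{π∼Q}[ ∑_{i : π(i) > π(j)} max{p_i − p_j, 0} ] ≤ p_j. -/
open Finset

/-!
Fix `j`, let `s` be the set of gladiators stronger than `j`, and for a ranking `π` in which some
member of `s` is below `j` let `c` be the nearest one.

* Exchanging `c` with another member `i` of `s` below `j` makes `i` the nearest one, so
  `(π, i) ↦ (π', c)`, with `π'` the new ranking, is an involution. Summing over its orbits, the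
  rearrangement inequality shows that `∑ weight π * p i` only grows when each `p i` is replaced by
  the `p c` of its ranking.
* Exchanging `c` with `j` yields a ranking `σ` with `weight π * p c ≤ p j * weight σ`, because the
  exponents of the two positions differ by at least one. The map `π ↦ σ` is injective, since `c` is
  the nearest member of `s` above `j` in `σ`, and it lowers the number `d` of members of `s` below
  `j` by one.

Hence `∑ weight π * ∑ p i ≤ p j * ∑ (d π + 1) * weight π`, where `i` runs over the members of `s`
below `j`, and subtracting `p j * ∑ d π * weight π` gives the bound.
-/

namespace Gladiator

lemma pow_mul_pow_le_pow_mul_pow {R : Type*} [CommSemiring R] [PartialOrder R] [IsOrderedRing R]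
    {x y : R} (hx : 0 ≤ x) (hxy : x ≤ y) {m n : ℕ} (hmn : m ≤ n) :
    x ^ n * y ^ m ≤ x ^ m * y ^ n := by
  obtain ⟨d, rfl⟩ := Nat.exists_eq_add_of_le hmn
  have hy : 0 ≤ y := hx.trans hxy
  calc x ^ (m + d) * y ^ m = x ^ m * y ^ m * x ^ d := by ring
    _ ≤ x ^ m * y ^ m * y ^ d := by gcongr
    _ = x ^ m * y ^ (m + d) := by ring

section Weight

variable {ι α R : Type*} [Fintype ι]

/-- The unnormalized stationary weight of the ranking `π` in the gladiator chain with strengths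
`p`. The exponent attached to a position is an arbitrary function `e` of it; for `n` positions
numbered from `0`, the chain has `e k = n - 1 - k`. -/
def weight [CommMonoid R] (e : α → ℕ) (p : ι → R) (π : ι ≃ α) : R := ∏ i, p i ^ e (π i)

variable {e : α → ℕ} {p : ι → R} {π : ι ≃ α} {a b : ι}

lemma weight_nonneg [CommSemiring R] [PartialOrder R] [IsOrderedRing R]
    (hp : ∀ i, 0 ≤ p i) (π : ι ≃ α) : 0 ≤ weight e p π :=
  prod_nonneg fun i _ => pow_nonneg (hp i) _

variable [DecidableEq ι]

lemma weight_eq_mul_prod_compl [CommMonoid R] (hab : a ≠ b) :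
    weight e p π = p a ^ e (π a) * p b ^ e (π b) * ∏ i ∈ {a, b}ᶜ, p i ^ e (π i) := by
  rw [weight, ← prod_mul_prod_compl {a, b}, prod_pair hab]

lemma weight_swap_eq_mul_prod_compl [CommMonoid R] (hab : a ≠ b) :
    weight e p ((Equiv.swap a b).trans π) =
      p a ^ e (π b) * p b ^ e (π a) * ∏ i ∈ {a, b}ᶜ, p i ^ e (π i) := by
  rw [weight_eq_mul_prod_compl hab]
  simp only [Equiv.trans_apply, Equiv.swap_apply_left, Equiv.swap_apply_right]
  congr 1
  refine prod_congr rfl fun i hi => ?_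
  simp only [mem_compl, mem_insert, mem_singleton, not_or] at hi
  rw [Equiv.swap_apply_of_ne_of_ne hi.1 hi.2]

section PartialOrder

variable [CommSemiring R] [PartialOrder R] [IsOrderedRing R]

lemma weight_le_weight_swap [Preorder α] (he : Antitone e) (hp : ∀ i, 0 ≤ p i)
    (hπ : π a ≤ π b) (hab : p a ≤ p b) :
    weight e p π ≤ weight e p ((Equiv.swap a b).trans π) := by
  obtain rfl | hne := eq_or_ne a b
  · simp only [Equiv.swap_self, Equiv.refl_trans, le_refl]
  rw [weight_eq_mul_prod_compl hne, weight_swap_eq_mul_prod_compl hne]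
  exact mul_le_mul_of_nonneg_right (pow_mul_pow_le_pow_mul_pow (hp a) hab (he hπ))
    (prod_nonneg fun i _ => pow_nonneg (hp i) _)

lemma weight_mul_le_mul_weight_swap [Preorder α] (he : StrictAnti e) (hp : ∀ i, 0 ≤ p i)
    (hπ : π a < π b) (hab : p a ≤ p b) :
    weight e p π * p b ≤ p a * weight e p ((Equiv.swap a b).trans π) := by
  have hne : a ≠ b := by rintro rfl; exact hπ.false
  rw [weight_eq_mul_prod_compl hne, weight_swap_eq_mul_prod_compl hne]
  set r := ∏ i ∈ {a, b}ᶜ, p i ^ e (π i)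
  have hr : 0 ≤ r := prod_nonneg fun i _ => pow_nonneg (hp i) _
  calc p a ^ e (π a) * p b ^ e (π b) * r * p b
      = p a ^ e (π a) * p b ^ (e (π b) + 1) * r := by ring
    _ ≤ p a ^ (e (π b) + 1) * p b ^ e (π a) * r :=
      mul_le_mul_of_nonneg_right (pow_mul_pow_le_pow_mul_pow (hp a) hab (he hπ)) hr
    _ = p a * (p a ^ e (π b) * p b ^ e (π a) * r) := by ring

end PartialOrder

lemma weight_mul_add_weight_swap_mul_le [CommRing R] [LinearOrder R] [IsOrderedRing R]
    [Preorder α] (he : Antitone e) (hp : ∀ i, 0 ≤ p i) (hπ : π a ≤ π b) :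
    weight e p π * p b + weight e p ((Equiv.swap a b).trans π) * p a ≤
      weight e p π * p a + weight e p ((Equiv.swap a b).trans π) * p b := by
  rcases le_total (p a) (p b) with hab | hba
  · exact mul_add_mul_le_mul_add_mul (weight_le_weight_swap he hp hπ hab) hab
  · have hw : weight e p ((Equiv.swap a b).trans π) ≤ weight e p π := by
      have h := weight_le_weight_swap (π := (Equiv.swap a b).trans π) (a := b) (b := a) he hp
        (by simpa using hπ) hba
      rwa [← Equiv.trans_assoc, Equiv.swap_comm b a, Equiv.swap_swap, Equiv.refl_trans] at h
    simpa only [add_comm] using mul_add_mul_le_mul_add_mul hw hba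

end Weight

section Below

variable {ι α : Type*} [LinearOrder α] {s : Finset ι} {j i k : ι} {π : ι ≃ α}

/-- The members of `s` ranked worse than `j`; a larger position is a worse rank. -/
def below (s : Finset ι) (j : ι) (π : ι ≃ α) : Finset ι := {i ∈ s | π j < π i}

lemma mem_below : i ∈ below s j π ↔ i ∈ s ∧ π j < π i := mem_filter

lemma ne_of_mem_below (hi : i ∈ below s j π) : i ≠ j := by
  rintro rfl
  exact (mem_below.1 hi).2.false

lemma sum_max_sub_eq_sum_below {R : Type*} [AddCommGroup R] [LinearOrder R] [IsOrderedAddMonoid R]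
    [Fintype ι] (p : ι → R) (j : ι) (π : ι ≃ α) :
    ∑ i with π j < π i, max (p i - p j) 0 = ∑ i ∈ below {i | p j < p i} j π, (p i - p j) := by
  rw [below, filter_comm, sum_filter (p j < p ·)]
  refine sum_congr rfl fun i _ => ?_
  split_ifs with h
  · exact max_eq_left (sub_nonneg.2 h.le)
  · exact max_eq_right (sub_nonpos.2 (not_lt.1 h))

open Classical in
/-- The best ranked member of `s` below `j`, or `j` itself if there is none. -/
noncomputable def nextBelow (s : Finset ι) (j : ι) (π : ι ≃ α) : ι :=
  if h : (below s j π).Nonempty then (exists_min_image _ π h).choose else j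

lemma nextBelow_spec (h : (below s j π).Nonempty) :
    nextBelow s j π ∈ below s j π ∧ ∀ i ∈ below s j π, π (nextBelow s j π) ≤ π i := by
  rw [nextBelow, dif_pos h]
  exact (exists_min_image _ π h).choose_spec

lemma nextBelow_mem (h : (below s j π).Nonempty) : nextBelow s j π ∈ below s j π :=
  (nextBelow_spec h).1

lemma apply_nextBelow_le (hi : i ∈ below s j π) : π (nextBelow s j π) ≤ π i :=
  (nextBelow_spec ⟨i, hi⟩).2 i hi

lemma nextBelow_eq (hi : i ∈ below s j π) (hmin : ∀ k ∈ below s j π, π i ≤ π k) :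
    nextBelow s j π = i :=
  π.injective <| (apply_nextBelow_le hi).antisymm (hmin _ (nextBelow_mem ⟨i, hi⟩))

variable [DecidableEq ι]

lemma swap_apply_mem_below {l : ι} (hi : i ∈ below s j π) (hk : k ∈ below s j π)
    (hl : l ∈ below s j π) : Equiv.swap i k l ∈ below s j π := by
  rw [Equiv.swap_apply_def]
  split_ifs <;> assumption

lemma below_swap_trans (hi : i ∈ below s j π) (hk : k ∈ below s j π) :
    below s j ((Equiv.swap i k).trans π) = below s j π := by
  ext l
  have hj : Equiv.swap i k j = j :=
    Equiv.swap_apply_of_ne_of_ne (ne_of_mem_below hi).symm (ne_of_mem_below hk).symm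
  simp only [mem_below, Equiv.trans_apply, hj] at hi hk ⊢
  rw [Equiv.swap_apply_def]
  split_ifs with hli hlk
  · simp only [hli, hi, hk, and_self]
  · simp only [hlk, hi, hk, and_self]
  · rfl

lemma nextBelow_swap_nextBelow (hi : i ∈ below s j π) :
    nextBelow s j ((Equiv.swap i (nextBelow s j π)).trans π) = i := by
  have hc := nextBelow_mem ⟨i, hi⟩
  refine nextBelow_eq (by rwa [below_swap_trans hi hc]) fun k hk => ?_
  rw [below_swap_trans hi hc] at hk
  simpa only [Equiv.trans_apply, Equiv.swap_apply_left] using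
    apply_nextBelow_le (swap_apply_mem_below hi hc hk)

lemma sum_below_swap_nextBelow {M : Type*} [AddCommMonoid M] [Fintype ι] [Fintype α]
    (s : Finset ι) (j : ι) (f : (ι ≃ α) → ι → M) :
    ∑ π, ∑ i ∈ below s j π, f ((Equiv.swap i (nextBelow s j π)).trans π) (nextBelow s j π) =
      ∑ π, ∑ i ∈ below s j π, f π i := by
  let exchange (x : (_ : ι ≃ α) × ι) : (_ : ι ≃ α) × ι :=
    ⟨(Equiv.swap x.2 (nextBelow s j x.1)).trans x.1, nextBelow s j x.1⟩
  have exchange_mem : ∀ x ∈ univ.sigma (below s j), exchange x ∈ univ.sigma (below s j) := by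
    simp only [mem_sigma, mem_univ, true_and, exchange]
    intro x hx
    have hc := nextBelow_mem ⟨x.2, hx⟩
    rwa [below_swap_trans hx hc]
  have exchange_exchange : ∀ x ∈ univ.sigma (below s j), exchange (exchange x) = x := by
    rintro ⟨π, i⟩ hx
    simp only [exchange]
    rw [nextBelow_swap_nextBelow (mem_sigma.1 hx).2, ← Equiv.trans_assoc,
      Equiv.swap_comm (nextBelow s j π) i, Equiv.swap_swap, Equiv.refl_trans]
  simp only [sum_sigma']
  exact sum_nbij' exchange exchange exchange_mem exchange_mem exchange_exchange
    exchange_exchange fun _ _ => rfl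

/-- The ranking obtained from `π` by exchanging `j` with the nearest member of `s` below it, or
`π` itself if there is none. -/
noncomputable def swapNextBelow (s : Finset ι) (j : ι) (π : ι ≃ α) : ι ≃ α :=
  (Equiv.swap j (nextBelow s j π)).trans π

lemma swapNextBelow_apply_self : swapNextBelow s j π j = π (nextBelow s j π) := by
  rw [swapNextBelow, Equiv.trans_apply, Equiv.swap_apply_left]

lemma swapNextBelow_apply_nextBelow : swapNextBelow s j π (nextBelow s j π) = π j := by
  rw [swapNextBelow, Equiv.trans_apply, Equiv.swap_apply_right]

lemma swapNextBelow_apply_of_ne (hj : i ≠ j) (hc : i ≠ nextBelow s j π) :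
    swapNextBelow s j π i = π i := by
  rw [swapNextBelow, Equiv.trans_apply, Equiv.swap_apply_of_ne_of_ne hj hc]

lemma swapNextBelow_apply_nextBelow_lt (h : (below s j π).Nonempty) :
    swapNextBelow s j π (nextBelow s j π) < swapNextBelow s j π j := by
  rw [swapNextBelow_apply_nextBelow, swapNextBelow_apply_self]
  exact (mem_below.1 (nextBelow_mem h)).2

lemma swapNextBelow_apply_le (hi : i ∈ s) (hij : swapNextBelow s j π i < swapNextBelow s j π j) :
    swapNextBelow s j π i ≤ swapNextBelow s j π (nextBelow s j π) := by
  obtain rfl | hc := eq_or_ne i (nextBelow s j π)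
  · rfl
  have hj : i ≠ j := by rintro rfl; exact hij.false
  rw [swapNextBelow_apply_of_ne hj hc, swapNextBelow_apply_self] at hij
  rw [swapNextBelow_apply_of_ne hj hc, swapNextBelow_apply_nextBelow]
  by_contra! hlt
  exact hij.not_ge (apply_nextBelow_le (mem_below.2 ⟨hi, hlt⟩))

lemma injOn_swapNextBelow (s : Finset ι) (j : ι) :
    Set.InjOn (swapNextBelow s j) {π : ι ≃ α | (below s j π).Nonempty} := by
  have apply_le {π ρ : ι ≃ α} (hρ : (below s j ρ).Nonempty)
      (h : swapNextBelow s j π = swapNextBelow s j ρ) :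
      swapNextBelow s j π (nextBelow s j ρ) ≤ swapNextBelow s j π (nextBelow s j π) :=
    swapNextBelow_apply_le (mem_below.1 (nextBelow_mem hρ)).1
      (by simpa only [h] using swapNextBelow_apply_nextBelow_lt hρ)
  intro π hπ ρ hρ h
  have hc : nextBelow s j π = nextBelow s j ρ :=
    (swapNextBelow s j π).injective <|
      (by simpa only [h] using apply_le hπ h.symm : _ ≤ _).antisymm (apply_le hρ h)
  simp only [swapNextBelow, hc] at h
  simpa only [← Equiv.trans_assoc, Equiv.swap_swap, Equiv.refl_trans] using
    congrArg (Equiv.trans (Equiv.swap j (nextBelow s j ρ))) h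

lemma card_below_le_card_below_swapNextBelow_add_one :
    #(below s j π) ≤ #(below s j (swapNextBelow s j π)) + 1 := by
  have hsub : (below s j π).erase (nextBelow s j π) ⊆ below s j (swapNextBelow s j π) := by
    intro i hi
    obtain ⟨hc, hi⟩ := mem_erase.1 hi
    refine mem_below.2 ⟨(mem_below.1 hi).1, ?_⟩
    rw [swapNextBelow_apply_self, swapNextBelow_apply_of_ne (ne_of_mem_below hi) hc]
    exact (apply_nextBelow_le hi).lt_of_ne (π.injective.ne hc.symm)
  exact Nat.sub_le_iff_le_add.1 (pred_card_le_card_erase.trans (card_le_card hsub))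

lemma sum_card_below_mul_swapNextBelow_le {R : Type*} [CommSemiring R] [PartialOrder R]
    [IsOrderedRing R] [Fintype ι] [Fintype α] (s : Finset ι) (j : ι) {f : (ι ≃ α) → R}
    (hf : ∀ π, 0 ≤ f π) :
    ∑ π, #(below s j π) * f (swapNextBelow s j π) ≤ ∑ π, (#(below s j π) + 1) * f π := by
  have nonempty_of_ne (π : ι ≃ α) (_ : π ∈ univ)
      (h : #(below s j π) * f (swapNextBelow s j π) ≠ 0) : (below s j π).Nonempty := by
    contrapose! h
    rw [h, card_empty, Nat.cast_zero, zero_mul]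
  calc ∑ π, #(below s j π) * f (swapNextBelow s j π)
      = ∑ π with (below s j π).Nonempty, #(below s j π) * f (swapNextBelow s j π) :=
        (sum_filter_of_ne nonempty_of_ne).symm
    _ ≤ ∑ π with (below s j π).Nonempty,
          (#(below s j (swapNextBelow s j π)) + 1) * f (swapNextBelow s j π) := by
        refine sum_le_sum fun π _ => mul_le_mul_of_nonneg_right ?_ (hf _)
        simpa only [Nat.cast_succ] using
          Nat.mono_cast (α := R) card_below_le_card_below_swapNextBelow_add_one
    _ = ∑ σ ∈ ({π | (below s j π).Nonempty} : Finset (ι ≃ α)).image (swapNextBelow s j),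
          (#(below s j σ) + 1) * f σ := by
        refine (sum_image (f := fun σ => (#(below s j σ) + 1) * f σ) ?_).symm
        simpa only [coe_filter_univ] using injOn_swapNextBelow s j
    _ ≤ ∑ π, (#(below s j π) + 1) * f π :=
        sum_le_univ_sum_of_nonneg fun σ =>
          mul_nonneg (add_nonneg (Nat.cast_nonneg _) zero_le_one) (hf σ)

end Below

section Excess

variable {ι α R : Type*} [Fintype ι] [DecidableEq ι] [Fintype α] [LinearOrder α]
  [CommRing R] [LinearOrder R] [IsStrictOrderedRing R] {e : α → ℕ} {p : ι → R}

lemma sum_weight_mul_le_sum_weight_mul_nextBelow (he : Antitone e) (hp : ∀ i, 0 ≤ p i)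
    (s : Finset ι) (j : ι) :
    ∑ π, ∑ i ∈ below s j π, weight e p π * p i ≤
      ∑ π, ∑ _i ∈ below s j π, weight e p π * p (nextBelow s j π) := by
  let exchange (π : ι ≃ α) (i : ι) := (Equiv.swap i (nextBelow s j π)).trans π
  have hpair : ∀ π, ∀ i ∈ below s j π,
      weight e p π * p i + weight e p (exchange π i) * p (nextBelow s j π) ≤
        weight e p π * p (nextBelow s j π) +
          weight e p (exchange π i) * p (nextBelow s j (exchange π i)) := by
    intro π i hi
    rw [nextBelow_swap_nextBelow hi]
    simpa only [exchange, Equiv.swap_comm] using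
      weight_mul_add_weight_swap_mul_le he hp (apply_nextBelow_le hi)
  have hsum := sum_le_sum fun π (_ : π ∈ univ) => sum_le_sum (hpair π)
  simp only [sum_add_distrib, exchange] at hsum
  rw [sum_below_swap_nextBelow s j fun π i => weight e p π * p i,
    sum_below_swap_nextBelow s j fun π _ => weight e p π * p (nextBelow s j π)] at hsum
  linarith

lemma sum_weight_mul_le_mul_sum_card_below_add_one (he : StrictAnti e) (hp : ∀ i, 0 ≤ p i)
    {s : Finset ι} {j : ι} (hs : ∀ i ∈ s, p j ≤ p i) :
    ∑ π, ∑ i ∈ below s j π, weight e p π * p i ≤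
      p j * ∑ π, (#(below s j π) + 1) * weight e p π :=
  calc ∑ π, ∑ i ∈ below s j π, weight e p π * p i
      ≤ ∑ π, ∑ _i ∈ below s j π, weight e p π * p (nextBelow s j π) :=
        sum_weight_mul_le_sum_weight_mul_nextBelow he.antitone hp s j
    _ ≤ ∑ π, ∑ _i ∈ below s j π, p j * weight e p (swapNextBelow s j π) := by
        refine sum_le_sum fun π _ => sum_le_sum fun i hi => ?_
        have hc := mem_below.1 (nextBelow_mem ⟨i, hi⟩)
        exact weight_mul_le_mul_weight_swap he hp hc.2 (hs _ hc.1)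
    _ = p j * ∑ π, #(below s j π) * weight e p (swapNextBelow s j π) := by
        simp only [sum_const, nsmul_eq_mul, mul_sum, mul_left_comm]
    _ ≤ p j * ∑ π, (#(below s j π) + 1) * weight e p π :=
        mul_le_mul_of_nonneg_left (sum_card_below_mul_swapNextBelow_le s j (weight_nonneg hp))
          (hp j)

lemma sum_weight_mul_sum_below_sub_le (he : StrictAnti e) (hp : ∀ i, 0 ≤ p i)
    {s : Finset ι} {j : ι} (hs : ∀ i ∈ s, p j ≤ p i) :
    ∑ π, weight e p π * ∑ i ∈ below s j π, (p i - p j) ≤ p j * ∑ π, weight e p π := by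
  have h := sum_weight_mul_le_mul_sum_card_below_add_one he hp hs
  simp only [add_one_mul, sum_add_distrib, mul_add] at h
  calc ∑ π, weight e p π * ∑ i ∈ below s j π, (p i - p j)
      = ∑ π, ∑ i ∈ below s j π, weight e p π * p i -
          p j * ∑ π, #(below s j π) * weight e p π := by
        rw [mul_sum, ← sum_sub_distrib]
        refine sum_congr rfl fun π _ => ?_
        rw [sum_sub_distrib, sum_const, nsmul_eq_mul, mul_sub, mul_sum]
        ring
    _ ≤ p j * ∑ π, weight e p π := sub_le_iff_le_add'.2 h

end Excess

end Gladiator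

theorem stmt19_general {ι α K : Type*} [Fintype ι] [DecidableEq ι] [Fintype α] [LinearOrder α]
    [Field K] [LinearOrder K] [IsStrictOrderedRing K] {e : α → ℕ} (he : StrictAnti e)
    {p : ι → K} (hp : ∀ i, 0 < p i) (j : ι) :
    ∑ π : ι ≃ α, (∏ i, p i ^ e (π i)) / (∑ σ : ι ≃ α, ∏ i, p i ^ e (σ i)) *
        ∑ i with π j < π i, max (p i - p j) 0 ≤ p j := by
  have hp' : ∀ i, 0 ≤ p i := fun i => (hp i).le
  simp only [Gladiator.sum_max_sub_eq_sum_below, div_mul_eq_mul_div, ← sum_div]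
  exact div_le_of_le_mul₀ (sum_nonneg fun π _ => Gladiator.weight_nonneg hp' π) (hp' j)
    (Gladiator.sum_weight_mul_sum_below_sub_le he hp' fun i hi => (mem_filter.1 hi).2.le)

/-- gladiator chain: for arbitrary positive strengths
`p_1 ≥ … ≥ p_n > 0` (not necessarily summing to 1) and the stationary
distribution `Q(π) ∝ ∏ p_i^{n−π(i)}` of the gladiator chain, for every
gladiator `j` the expected total excess strength of stronger gladiators ranked
below `j` is at most `p_j`.  Larger `π i` means a worse (later) rank. -/
theorem stmt19 (n : ℕ) (hn : 1 ≤ n) (p : Fin n → ℝ)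
    (hpos : ∀ i, 0 < p i) (hmono : ∀ a b : Fin n, a ≤ b → p b ≤ p a)
    (Z : ℝ) (hZ : Z = ∑ σ : Equiv.Perm (Fin n), ∏ i, p i ^ (n - 1 - (σ i : ℕ)))
    (Q : Equiv.Perm (Fin n) → ℝ)
    (hQ : ∀ π : Equiv.Perm (Fin n), Q π = (∏ i, p i ^ (n - 1 - (π i : ℕ))) / Z)
    (j : Fin n) :
    ∑ π : Equiv.Perm (Fin n),
        Q π * ∑ i ∈ Finset.univ.filter (fun i => π j < π i), max (p i - p j) 0
      ≤ p j := by
  simpa only [hQ, hZ] using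
    stmt19_general (e := fun k : Fin n => n - 1 - (k : ℕ)) (fun a b h => by grind) hpos j
end
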